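/- Fix three distinct elements i, j, k of P. Then the Keel module V_P is a free ℤ-module, and the images of the elements e_S with i ∈ S and 2 ≤ |S| ≤ n−3, together with the image of e_{{j,k}}, form a ℤ-basis of V_P. (Proposition 4.2: H²( M̄_{0,P}; ℤ) is freely generated by the classes δ_S with i ∈ S and 2 ≤ |S| ≤ n−3, or S = {j,k}.) -/

import Mathlib

/-- `B(P)`: the set of subsets `S ⊆ P` with `2 ≤ |S| ≤ n - 2`, as a subtype. -/
abbrev KeelB (P : Type*) [Fintype P] [DecidableEq P] : Type _ :=
  {S : Finset P // 2 ≤ S.card ∧ S.card ≤ Fintype.card P - 2}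

/-- The complement operation on `B(P)`. -/
def KeelB.compl {P : Type*} [Fintype P] [DecidableEq P] (S : KeelB P) : KeelB P :=
  ⟨(S : Finset P)ᶜ, by
    have h1 := S.2.1
    have h2 := S.2.2
    have h3 : (S : Finset P).card ≤ Fintype.card P := Finset.card_le_univ _
    rw [Finset.card_compl]
    omega⟩

/-- The sum `Σ_{S ∈ B(P), p,q ∈ S, r,s ∉ S} e_S` in the free ℤ-module on `B(P)`. -/
noncomputable def keelQuad {P : Type*} [Fintype P] [DecidableEq P] (p q r s : P) : KeelB P →₀ ℤ :=
  ∑ S ∈ Finset.univ.filter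
      (fun S : KeelB P =>
        p ∈ (S : Finset P) ∧ q ∈ (S : Finset P) ∧ r ∉ (S : Finset P) ∧ s ∉ (S : Finset P)),
    Finsupp.single S 1

/-- The defining relations of the Keel module: (i) `e_S - e_{P∖S}` for `S ∈ B(P)`;
(ii) the four-point relations for every quadruple of distinct elements of `P`. -/
def keelRels (P : Type*) [Fintype P] [DecidableEq P] : Set (KeelB P →₀ ℤ) :=
  (Set.range fun S : KeelB P => Finsupp.single S 1 - Finsupp.single S.compl 1) ∪
  {x | ∃ p q r s : P, p ≠ q ∧ p ≠ r ∧ p ≠ s ∧ q ≠ r ∧ q ≠ s ∧ r ≠ s ∧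
      (x = keelQuad p q r s - keelQuad p r q s ∨ x = keelQuad p q r s - keelQuad p s q r)}

/-- The Keel module `V_P`: the free ℤ-module on `B(P)` modulo the Keel relations. -/
abbrev KeelModule (P : Type*) [Fintype P] [DecidableEq P] : Type _ :=
  (KeelB P →₀ ℤ) ⧸ Submodule.span ℤ (keelRels P)

/-- The image of the basis element `e_S` in the Keel module. -/
noncomputable def keelClass {P : Type*} [Fintype P] [DecidableEq P] (S : KeelB P) : KeelModule P :=
  Submodule.Quotient.mk (Finsupp.single S 1)

/-!
Fix `i`. By symmetry under complementation only the subsets containing `i` matter, and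
inclusion-exclusion rewrites every four-point relation as a relation between the sums
`ψ(a, b) = Σ_{i ∈ T, a, b ∉ T} e_T`. The four-point relations therefore say exactly that `ψ(a, b)`
does not depend on the pair `{a, b}`. The largest set occurring in `ψ(a, b)` is `{a, b}ᶜ`, so that,
once the common value `ψ` is known, this relation determines `e_{{a, b}ᶜ}` through the classes of
smaller sets containing `i`. Hence the smaller sets together with `ψ` form a basis, and `ψ` may be
exchanged for `e_{{j, k}} = ψ(j, k) - Σ_{i ∈ T ⊂ {j, k}ᶜ} e_T`.
-/

section KeelB

open scoped Finset

variable {P : Type*} [Fintype P] [DecidableEq P]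

theorem KeelB.mem_compl {S : KeelB P} {a : P} : a ∈ S.compl.1 ↔ a ∉ S.1 :=
  Finset.mem_compl

theorem KeelB.compl_compl (S : KeelB P) : S.compl.compl = S :=
  Subtype.ext (_root_.compl_compl S.1)

theorem KeelB.compl_involutive : Function.Involutive (KeelB.compl (P := P)) :=
  KeelB.compl_compl

theorem KeelB.card_le_or_card_eq (S : KeelB P) :
    #S.1 ≤ Fintype.card P - 3 ∨ #S.1 = Fintype.card P - 2 := by
  have := S.2
  omega

theorem KeelB.card_le_of_ssubset {S T : KeelB P} (h : T.1 ⊂ S.1) : #T.1 ≤ Fintype.card P - 3 := by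
  have := Finset.card_lt_card h
  have := S.2.2
  omega

end KeelB

namespace Keel

open scoped Finset

variable {P : Type*} [Fintype P] [DecidableEq P] {M : Type*}

section Sums

variable [AddCommMonoid M]

/-- The four-point sum `Σ_{p, q ∈ S, r, s ∉ S} f S` of an arbitrary function `f` on `B(P)`;
`keelQuad` is the case `f S = e_S`. -/
def quad (f : KeelB P → M) (p q r s : P) : M :=
  ∑ S : KeelB P with p ∈ S.1 ∧ q ∈ S.1 ∧ r ∉ S.1 ∧ s ∉ S.1, f S

/-- The sum of `f T` over the `T ∈ B(P)` with `i ∈ T ⊆ U`. For `f T = δ_T` and `U = {a, b}ᶜ` it is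
the usual boundary expression of the cotangent class `ψ_i`. -/
def psi (f : KeelB P → M) (i : P) (U : Finset P) : M :=
  ∑ T : KeelB P with i ∈ T.1 ∧ T.1 ⊆ U, f T

/-- The part of `psi f i U` that comes from proper subsets of `U`. -/
def properPsi (f : KeelB P → M) (i : P) (U : Finset P) : M :=
  ∑ T : KeelB P with i ∈ T.1 ∧ T.1 ⊂ U, f T

theorem quad_comm_right (f : KeelB P → M) (p q r s : P) : quad f p q r s = quad f p q s r := by
  simp only [quad, and_comm (a := r ∉ _)]

theorem psi_eq_zero_of_notMem (f : KeelB P → M) {i : P} {U : Finset P} (hi : i ∉ U) :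
    psi f i U = 0 :=
  Finset.sum_eq_zero fun _ hT =>
    have hT := (Finset.mem_filter.1 hT).2
    absurd (hT.2 hT.1) hi

theorem psi_compl_pair (f : KeelB P → M) (i a b : P) :
    psi f i {a, b}ᶜ = ∑ T : KeelB P with i ∈ T.1 ∧ a ∉ T.1 ∧ b ∉ T.1, f T := by
  simp only [psi, Finset.subset_compl_iff_disjoint_left, Finset.disjoint_insert_left,
    Finset.disjoint_singleton_left]

theorem psi_eq_add_properPsi (f : KeelB P → M) {i : P} {S : KeelB P} (hi : i ∈ S.1) :
    psi f i S.1 = f S + properPsi f i S.1 := by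
  have hinsert : Finset.univ.filter (fun T : KeelB P => i ∈ T.1 ∧ T.1 ⊆ S.1) =
      insert S (Finset.univ.filter fun T => i ∈ T.1 ∧ T.1 ⊂ S.1) := by
    ext T
    simp only [Finset.mem_filter_univ, Finset.mem_insert, Subtype.ext_iff, subset_iff_ssubset_or_eq]
    grind
  rw [psi, properPsi, hinsert, Finset.sum_insert (by simp)]

theorem quad_eq_sum_mem_add_sum_mem {f : KeelB P → M} (hf : ∀ S, f S.compl = f S)
    (i p q r s : P) :
    quad f p q r s =
      (∑ S : KeelB P with i ∈ S.1 ∧ p ∈ S.1 ∧ q ∈ S.1 ∧ r ∉ S.1 ∧ s ∉ S.1, f S) +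
        ∑ S : KeelB P with i ∈ S.1 ∧ p ∉ S.1 ∧ q ∉ S.1 ∧ r ∈ S.1 ∧ s ∈ S.1, f S := by
  have hcompl : (∑ S : KeelB P with i ∈ S.1 ∧ p ∉ S.1 ∧ q ∉ S.1 ∧ r ∈ S.1 ∧ s ∈ S.1, f S) =
      ∑ S : KeelB P with i ∉ S.1 ∧ p ∈ S.1 ∧ q ∈ S.1 ∧ r ∉ S.1 ∧ s ∉ S.1, f S := by
    refine Finset.sum_equiv KeelB.compl_involutive.toPerm (fun S => ?_) fun S _ => (hf S).symm
    simp [KeelB.mem_compl]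
  rw [hcompl, quad, ← Finset.sum_filter_add_sum_filter_not _ (fun S : KeelB P => i ∈ S.1),
    Finset.filter_filter, Finset.filter_filter]
  simp only [and_comm (b := i ∈ _), and_comm (b := i ∉ _)]

/-- The functions on `B(P)` that respect the Keel relations, i.e. that extend to linear maps on the
Keel module. By `quad_comm_right`, the first family of four-point relations implies the second. -/
structure IsKeelMap (f : KeelB P → M) : Prop where
  map_compl (S : KeelB P) : f S.compl = f S
  quad_eq {p q r s : P} (hpq : p ≠ q) (hpr : p ≠ r) (hps : p ≠ s) (hqr : q ≠ r) (hqs : q ≠ s)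
    (hrs : r ≠ s) : quad f p q r s = quad f p r q s

end Sums

section FourPoint

variable [AddCommGroup M]

-- With `i ∈ S`, put `x_a = 1` if `a ∉ S` and `x_a = 0` otherwise: the cubic and quartic terms of
-- `x_p x_q (1 - x_r) (1 - x_s) + (1 - x_p) (1 - x_q) x_r x_s` are symmetric in `p, q, r, s`.
theorem quad_sub_quad {f : KeelB P → M} (hf : ∀ S, f S.compl = f S) (i p q r s : P) :
    quad f p q r s - quad f p r q s =
      psi f i {p, q}ᶜ + psi f i {r, s}ᶜ - (psi f i {p, r}ᶜ + psi f i {q, s}ᶜ) := by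
  rw [quad_eq_sum_mem_add_sum_mem hf i, quad_eq_sum_mem_add_sum_mem hf i]
  simp only [psi_compl_pair, Finset.sum_filter, ← Finset.sum_add_distrib,
    ← Finset.sum_sub_distrib]
  refine Finset.sum_congr rfl fun S _ => ?_
  by_cases hi : i ∈ S.1 <;> by_cases hp : p ∈ S.1 <;> by_cases hq : q ∈ S.1 <;>
    by_cases hr : r ∈ S.1 <;> by_cases hs : s ∈ S.1 <;> simp [hi, hp, hq, hr, hs]

theorem exists_eq_compl_pair {i : P} {U : Finset P} (hi : i ∈ U)
    (hU : #U = Fintype.card P - 2) : ∃ a b, a ≠ b ∧ i ≠ a ∧ i ≠ b ∧ U = {a, b}ᶜ := by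
  have hpos : 0 < #U := Finset.card_pos.2 ⟨i, hi⟩
  obtain ⟨a, b, hab, hUab⟩ := Finset.card_eq_two.1 (show #Uᶜ = 2 by rw [Finset.card_compl]; omega)
  rw [compl_eq_comm] at hUab
  subst hUab
  simp only [Finset.mem_compl, Finset.mem_insert, Finset.mem_singleton, not_or] at hi
  exact ⟨a, b, hab, hi.1, hi.2, rfl⟩

theorem IsKeelMap.psi_compl_pair_exchange {f : KeelB P → M} (hf : IsKeelMap f) {i a b c : P}
    (ha : i ≠ a) (hb : i ≠ b) (hc : i ≠ c) (hab : a ≠ b) (hcb : c ≠ b) :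
    psi f i {a, b}ᶜ = psi f i {c, b}ᶜ := by
  obtain rfl | hac := eq_or_ne a c
  · rfl
  have h := quad_sub_quad hf.map_compl i i c a b
  rw [hf.quad_eq hc ha hb hac.symm hcb hab, sub_self,
    psi_eq_zero_of_notMem f (U := {i, c}ᶜ) (by simp),
    psi_eq_zero_of_notMem f (U := {i, a}ᶜ) (by simp), zero_add, zero_add] at h
  exact sub_eq_zero.1 h.symm

theorem IsKeelMap.psi_eq_psi {f : KeelB P → M} (hf : IsKeelMap f) {i : P} {U V : Finset P}
    (hiU : i ∈ U) (hiV : i ∈ V) (hU : #U = Fintype.card P - 2) (hV : #V = Fintype.card P - 2) :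
    psi f i U = psi f i V := by
  obtain ⟨a, b, hab, ha, hb, rfl⟩ := exists_eq_compl_pair hiU hU
  obtain ⟨c, d, hcd, hc, hd, rfl⟩ := exists_eq_compl_pair hiV hV
  obtain rfl | hbc := eq_or_ne b c
  · rw [Finset.pair_comm b d]
    exact hf.psi_compl_pair_exchange ha hb hd hab hcd.symm
  · rw [hf.psi_compl_pair_exchange ha hb hc hab hbc.symm, Finset.pair_comm c b,
      Finset.pair_comm c d]
    exact hf.psi_compl_pair_exchange hb hc hd hbc hcd.symm

theorem isKeelMap_of_psi_eq {f : KeelB P → M} (hf : ∀ S, f S.compl = f S) (i : P) (m : M)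
    (hm : ∀ U : Finset P, i ∈ U → #U = Fintype.card P - 2 → psi f i U = m) : IsKeelMap f where
  map_compl := hf
  quad_eq {p q r s} hpq hpr hps hqr hqs hrs := by
    have hpsi {a b : P} (hab : a ≠ b) :
        psi f i {a, b}ᶜ = if i = a ∨ i = b then 0 else m := by
      split_ifs with hi
      · exact psi_eq_zero_of_notMem f (by simpa [or_iff_not_imp_left] using hi)
      · exact hm _ (by simpa [not_or] using hi) (by rw [Finset.card_compl, Finset.card_pair hab])
    rw [← sub_eq_zero, quad_sub_quad hf i, hpsi hpq, hpsi hrs, hpsi hpr, hpsi hqs, sub_eq_zero]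
    -- At most one of `p, q, r, s` is `i`, so both sides are `m` or both are `m + m`.
    grind

end FourPoint

section UniversalProperty

variable [AddCommGroup M]

theorem linearCombination_keelQuad (f : KeelB P → M) (p q r s : P) :
    Finsupp.linearCombination ℤ f (keelQuad p q r s) = quad f p q r s := by
  simp [keelQuad, quad]

theorem span_keelRels_le_ker_iff {f : KeelB P → M} :
    Submodule.span ℤ (keelRels P) ≤ LinearMap.ker (Finsupp.linearCombination ℤ f) ↔
      IsKeelMap f := by
  rw [Submodule.span_le]
  constructor
  · intro h
    refine ⟨fun S => ?_, fun {p q r s} hpq hpr hps hqr hqs hrs => ?_⟩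
    · have hS := h (Or.inl ⟨S, rfl⟩)
      simp only [SetLike.mem_coe, LinearMap.mem_ker, map_sub, Finsupp.linearCombination_single,
        one_smul] at hS
      exact (sub_eq_zero.1 hS).symm
    · have hquad := h (Or.inr ⟨p, q, r, s, hpq, hpr, hps, hqr, hqs, hrs, Or.inl rfl⟩)
      simpa only [SetLike.mem_coe, LinearMap.mem_ker, map_sub, linearCombination_keelQuad,
        sub_eq_zero] using hquad
  · rintro hf x (⟨S, rfl⟩ | ⟨p, q, r, s, hpq, hpr, hps, hqr, hqs, hrs, rfl | rfl⟩)
    · simp [hf.map_compl]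
    · simp [linearCombination_keelQuad, hf.quad_eq hpq hpr hps hqr hqs hrs]
    · simp [linearCombination_keelQuad, quad_comm_right f p q r s,
        hf.quad_eq hpq hps hpr hqs hqr hrs.symm]

/-- The linear map on the Keel module with prescribed values on the classes `e_S`. -/
noncomputable def lift (f : KeelB P → M) (hf : IsKeelMap f) : KeelModule P →ₗ[ℤ] M :=
  (Submodule.span ℤ (keelRels P)).liftQ (Finsupp.linearCombination ℤ f)
    (span_keelRels_le_ker_iff.2 hf)

theorem lift_keelClass {f : KeelB P → M} (hf : IsKeelMap f) (S : KeelB P) :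
    lift f hf (keelClass S) = f S := by
  simp [lift, keelClass]

theorem linearCombination_keelClass :
    Finsupp.linearCombination ℤ (keelClass (P := P)) = (Submodule.span ℤ (keelRels P)).mkQ := by
  ext S
  simp [keelClass]

theorem isKeelMap_keelClass : IsKeelMap (keelClass (P := P)) :=
  span_keelRels_le_ker_iff.1 (by rw [linearCombination_keelClass, Submodule.ker_mkQ])

theorem span_range_keelClass : Submodule.span ℤ (Set.range (keelClass (P := P))) = ⊤ := by
  rw [← Finsupp.range_linearCombination, linearCombination_keelClass, Submodule.range_mkQ]

end UniversalProperty

section Extension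

variable [AddCommGroup M]

/-- The function on `B(P)`, invariant under complementation, that agrees with `g` on the sets of
size at most `n - 3` containing `i`, and whose values on the sets of size `n - 2` containing `i` are
chosen such that all the sums `psi` over them equal `m`. -/
def extend (i : P) (g : KeelB P → M) (m : M) (S : KeelB P) : M :=
  let T := if i ∈ S.1 then S else S.compl
  if #T.1 ≤ Fintype.card P - 3 then g T else m - properPsi g i T.1

theorem extend_of_card_le {i : P} (g : KeelB P → M) (m : M) {S : KeelB P} (hi : i ∈ S.1)
    (hS : #S.1 ≤ Fintype.card P - 3) : extend i g m S = g S := by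
  simp [extend, hi, hS]

theorem extend_of_card_eq {i : P} (g : KeelB P → M) (m : M) {S : KeelB P} (hi : i ∈ S.1)
    (hS : #S.1 = Fintype.card P - 2) : extend i g m S = m - properPsi g i S.1 := by
  have hlt : ¬ #S.1 ≤ Fintype.card P - 3 := by have := S.2; omega
  simp only [extend, if_pos hi, if_neg hlt]

theorem extend_compl (i : P) (g : KeelB P → M) (m : M) (S : KeelB P) :
    extend i g m S.compl = extend i g m S := by
  by_cases hi : i ∈ S.1 <;> simp [extend, KeelB.mem_compl, hi, KeelB.compl_compl]

theorem properPsi_extend (i : P) (g : KeelB P → M) (m : M) (S : KeelB P) :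
    properPsi (extend i g m) i S.1 = properPsi g i S.1 :=
  Finset.sum_congr rfl fun _ hT =>
    have hT := (Finset.mem_filter.1 hT).2
    extend_of_card_le g m hT.1 (KeelB.card_le_of_ssubset hT.2)

theorem psi_extend {i : P} (g : KeelB P → M) (m : M) {S : KeelB P} (hi : i ∈ S.1)
    (hS : #S.1 = Fintype.card P - 2) : psi (extend i g m) i S.1 = m := by
  rw [psi_eq_add_properPsi _ hi, extend_of_card_eq g m hi hS, properPsi_extend, sub_add_cancel]

theorem isKeelMap_extend (hn : 4 ≤ Fintype.card P) (i : P) (g : KeelB P → M) (m : M) :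
    IsKeelMap (extend i g m) :=
  isKeelMap_of_psi_eq (extend_compl i g m) i m fun U hi hU =>
    psi_extend g m (S := ⟨U, by omega⟩) hi hU

theorem IsKeelMap.extend_eq {f : KeelB P → M} (hf : IsKeelMap f) {i : P} {U : Finset P}
    (hiU : i ∈ U) (hU : #U = Fintype.card P - 2) : extend i f (psi f i U) = f := by
  ext S
  wlog hi : i ∈ S.1 generalizing S
  · rw [← extend_compl, ← hf.map_compl]
    exact this S.compl (KeelB.mem_compl.2 hi)
  obtain hS | hS := S.card_le_or_card_eq
  · exact extend_of_card_le f _ hi hS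
  · rw [extend_of_card_eq f _ hi hS, hf.psi_eq_psi hiU hi hU hS, psi_eq_add_properPsi f hi,
      add_sub_cancel_right]

theorem properPsi_mem {N : Submodule ℤ M} {i : P} {g : KeelB P → M}
    (hg : ∀ T : KeelB P, i ∈ T.1 → #T.1 ≤ Fintype.card P - 3 → g T ∈ N) (S : KeelB P) :
    properPsi g i S.1 ∈ N :=
  N.sum_mem fun T hT =>
    have hT := (Finset.mem_filter.1 hT).2
    hg T hT.1 (KeelB.card_le_of_ssubset hT.2)

theorem extend_mem {N : Submodule ℤ M} {i : P} {g : KeelB P → M} {m : M}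
    (hg : ∀ T : KeelB P, i ∈ T.1 → #T.1 ≤ Fintype.card P - 3 → g T ∈ N) (hm : m ∈ N)
    (S : KeelB P) : extend i g m S ∈ N := by
  wlog hi : i ∈ S.1 generalizing S
  · rw [← extend_compl]
    exact this S.compl (KeelB.mem_compl.2 hi)
  obtain hS | hS := S.card_le_or_card_eq
  · exact extend_of_card_le g m hi hS ▸ hg S hi hS
  · exact extend_of_card_eq g m hi hS ▸ N.sub_mem hm (properPsi_mem hg S)

end Extension

section Basis

variable {i j k : P}

/-- The indices of the basis: the `S ∈ B(P)` with `i ∈ S` and `|S| ≤ n - 3`, and `S = {j, k}`. -/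
def basisIndex (i j k : P) : Set (KeelB P) :=
  {S | (i ∈ S.1 ∧ #S.1 ≤ Fintype.card P - 3) ∨ S.1 = {j, k}}

/-- The pair `{j, k}` as an element of `B(P)`. -/
def pair (hn : 4 ≤ Fintype.card P) (hjk : j ≠ k) : KeelB P :=
  ⟨{j, k}, by rw [Finset.card_pair hjk]; omega⟩

theorem mem_compl_pair (hn : 4 ≤ Fintype.card P) (hij : i ≠ j) (hik : i ≠ k) (hjk : j ≠ k) :
    i ∈ (pair hn hjk).compl.1 := by
  simp [KeelB.mem_compl, pair, hij, hik]

theorem card_compl_pair (hn : 4 ≤ Fintype.card P) (hjk : j ≠ k) :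
    #(pair hn hjk).compl.1 = Fintype.card P - 2 := by
  rw [KeelB.compl, pair, Finset.card_compl, Finset.card_pair hjk]

/-- The extension of `g` from `basisIndex i j k` to a function respecting the Keel relations: the
value of `psi` is forced by `psi_eq_add_properPsi` for the complement of `{j, k}`. -/
def extendBasisIndex [AddCommGroup M] (hn : 4 ≤ Fintype.card P) (i : P) (hjk : j ≠ k)
    (g : KeelB P → M) : KeelB P → M :=
  extend i g (g (pair hn hjk) + properPsi g i (pair hn hjk).compl.1)

theorem extendBasisIndex_of_mem [AddCommGroup M] (hn : 4 ≤ Fintype.card P) (hij : i ≠ j)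
    (hik : i ≠ k) (hjk : j ≠ k) (g : KeelB P → M) {S : KeelB P} (hS : S ∈ basisIndex i j k) :
    extendBasisIndex hn i hjk g S = g S := by
  rcases hS with ⟨hi, hS⟩ | hS
  · exact extend_of_card_le g _ hi hS
  · obtain rfl : S = pair hn hjk := Subtype.ext hS
    rw [extendBasisIndex, ← extend_compl, extend_of_card_eq g _ (mem_compl_pair hn hij hik hjk)
      (card_compl_pair hn hjk), add_sub_cancel_right]

theorem linearIndepOn_keelClass (hn : 4 ≤ Fintype.card P) (hij : i ≠ j) (hik : i ≠ k)
    (hjk : j ≠ k) : LinearIndepOn ℤ keelClass (basisIndex i j k) := by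
  let g : KeelB P → KeelB P →₀ ℤ := fun S => Finsupp.single S 1
  let φ : KeelModule P →ₗ[ℤ] KeelB P →₀ ℤ :=
    lift (extendBasisIndex hn i hjk g) (isKeelMap_extend hn i g _)
  have hφ : Set.EqOn g (φ ∘ keelClass) (basisIndex i j k) := fun S hS =>
    ((lift_keelClass _ S).trans (extendBasisIndex_of_mem hn hij hik hjk g hS)).symm
  have hg : LinearIndependent ℤ g := Finsupp.linearIndependent_single_one ℤ (KeelB P)
  exact ((hg.linearIndepOn _).congr hφ).of_comp φ

theorem span_keelClass_image_basisIndex (hn : 4 ≤ Fintype.card P) (hij : i ≠ j) (hik : i ≠ k)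
    (hjk : j ≠ k) : Submodule.span ℤ (keelClass '' basisIndex i j k) = ⊤ := by
  set N := Submodule.span ℤ (keelClass '' basisIndex i j k)
  have hsmall (T : KeelB P) (hi : i ∈ T.1) (hT : #T.1 ≤ Fintype.card P - 3) : keelClass T ∈ N :=
    Submodule.subset_span ⟨T, Or.inl ⟨hi, hT⟩, rfl⟩
  have hpair : keelClass (pair hn hjk) ∈ N := Submodule.subset_span ⟨_, Or.inr rfl, rfl⟩
  have hi := mem_compl_pair hn hij hik hjk
  have hpsi : psi keelClass i (pair hn hjk).compl.1 ∈ N := by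
    rw [psi_eq_add_properPsi _ hi, isKeelMap_keelClass.map_compl]
    exact N.add_mem hpair (properPsi_mem hsmall _)
  rw [eq_top_iff, ← span_range_keelClass, Submodule.span_le, Set.range_subset_iff]
  intro S
  rw [← isKeelMap_keelClass.extend_eq hi (card_compl_pair hn hjk)]
  exact extend_mem hsmall hpsi S

end Basis

end Keel

/-- Proposition 4.2: the Keel module `V_P` is a free ℤ-module, and the classes `δ_S`
with `i ∈ S` and `2 ≤ |S| ≤ n - 3`, or `S = {j,k}`, form a ℤ-basis of it. -/
theorem keelModule_basis (P : Type*) [Fintype P] [DecidableEq P]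
    (hn : 4 ≤ Fintype.card P) (i j k : P) (hij : i ≠ j) (hik : i ≠ k) (hjk : j ≠ k) :
    ∃ b : Module.Basis {S : KeelB P // (i ∈ (S : Finset P) ∧
        (S : Finset P).card ≤ Fintype.card P - 3) ∨ (S : Finset P) = {j, k}}
      ℤ (KeelModule P), ∀ S, b S = keelClass S.val := by
  have hindep := Keel.linearIndepOn_keelClass hn hij hik hjk
  have hspan := Keel.span_keelClass_image_basisIndex hn hij hik hjk
  rw [Set.image_eq_range] at hspan
  exact ⟨Module.Basis.mk hindep hspan.ge, Module.Basis.mk_apply hindep hspan.ge⟩
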